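/- Let Γ be a nontrivial group and X a geometric boundary for Γ. Let (α, A) and (β, B) be two B-cocycles Γ × X → ℝ. Then ℓ_α(γ) = ℓ_β(γ) for all γ ∈ Γ ∖ {e} if and only if there exists a continuous function φ : X → ℝ such that α(γ, x) − β(γ, x) = φ(γx) − φ(x) for all γ ∈ Γ and x ∈ X (i.e., [α] = [β] in H¹_c(Γ, X, ℝ)). -/

import Mathlib

open MeasureTheory
def IsHyperbolic {Γ X : Type*} [Group Γ] [TopologicalSpace X] [MulAction Γ X]
    (γ : Γ) (m p : X) : Prop :=
  m ≠ p ∧ γ • m = m ∧ γ • p = p ∧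
  (∀ K : Set X, IsCompact K → m ∉ K → ∀ U : Set X, IsOpen U → p ∈ U →
    ∃ N : ℕ, ∀ n ≥ N, ∀ x ∈ K, (γ ^ n) • x ∈ U) ∧
  (∀ K : Set X, IsCompact K → p ∉ K → ∀ V : Set X, IsOpen V → m ∈ V →
    ∃ N : ℕ, ∀ n ≥ N, ∀ x ∈ K, (γ⁻¹ ^ n) • x ∈ V)

structure IsGeometricBoundary (Γ X : Type*) [Group Γ] [TopologicalSpace X]
    [MeasurableSpace X] [MulAction Γ X] (pm pp : Γ → X) : Prop where
  compact : CompactSpace X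
  t2 : T2Space X
  nontrivial : Nontrivial X
  contSMul : ContinuousConstSMul Γ X
  borel : BorelSpace X
  minimal : ∀ x : X, Dense (MulAction.orbit Γ x)
  hyp : ∀ γ : Γ, γ ≠ 1 → IsHyperbolic γ (pm γ) (pp γ)
  measures : ∃ μ μ' : Measure X, μ ≠ 0 ∧ μ' ≠ 0 ∧
    IsFiniteMeasure μ ∧ IsFiniteMeasure μ' ∧
    (∀ γ : Γ, ∀ E : Set X, MeasurableSet E → (μ E = 0 ↔ μ ((γ • ·) ⁻¹' E) = 0)) ∧
    (∀ γ : Γ, ∀ E : Set X, MeasurableSet E → (μ' E = 0 ↔ μ' ((γ • ·) ⁻¹' E) = 0)) ∧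
    (∀ S : Set (X × X), MeasurableSet S →
      (∀ γ : Γ, (fun q : X × X => (γ • q.1, γ • q.2)) ⁻¹' S = S) →
      μ.prod μ' S = 0 ∨ μ.prod μ' Sᶜ = 0)

def IsCocycle {Γ X : Type*} [Group Γ] [MulAction Γ X] (c : Γ → X → ℝ) : Prop :=
  ∀ γ η : Γ, ∀ x : X, c (γ * η) x = c γ (η • x) + c η x

def IsBCocycle {Γ X : Type*} [Group Γ] [TopologicalSpace X] [MulAction Γ X]
    (c : Γ → X → ℝ) (C : X → X → ℝ) : Prop :=
  IsCocycle c ∧ (∀ γ : Γ, Continuous (c γ)) ∧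
  ContinuousOn (fun q : X × X => C q.1 q.2) {q : X × X | q.1 ≠ q.2} ∧
  ∀ γ : Γ, ∀ x y : X, x ≠ y → C (γ • x) (γ • y) - C x y = c γ x + c γ y

open Filter Topology

namespace GB

variable {Γ X : Type*} [Group Γ] [TopologicalSpace X] [MulAction Γ X]

lemma hyp_inv {g : Γ} {m p : X} (h : IsHyperbolic g m p) : IsHyperbolic g⁻¹ p m := by
  obtain ⟨h1, h2, h3, h4, h5⟩ := h
  refine ⟨h1.symm, ?_, ?_, h5, ?_⟩
  · rw [inv_smul_eq_iff, h3]
  · rw [inv_smul_eq_iff, h2]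
  · simpa using h4

lemma hyp_conj [ContinuousConstSMul Γ X] {g : Γ} {m p : X} (h : IsHyperbolic g m p) (k : Γ) :
    IsHyperbolic (k * g * k⁻¹) (k • m) (k • p) := by
  obtain ⟨h1, h2, h3, h4, h5⟩ := h
  have key : ∀ (g : Γ) (m p : X), (∀ K : Set X, IsCompact K → m ∉ K → ∀ U : Set X, IsOpen U → p ∈ U →
    ∃ N : ℕ, ∀ n ≥ N, ∀ x ∈ K, (g ^ n) • x ∈ U) → (∀ K : Set X, IsCompact K → k • m ∉ K →
    ∀ U : Set X, IsOpen U → k • p ∈ U →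
    ∃ N : ℕ, ∀ n ≥ N, ∀ x ∈ K, ((k * g * k⁻¹) ^ n) • x ∈ U) := by
    intro g m p H K hK hm U hU hp
    obtain ⟨N, hN⟩ := H ((k⁻¹ • ·) '' K) (hK.image (continuous_const_smul _)) (by
      rintro ⟨x, hx, hxm⟩
      apply hm
      have : k • m = x := by rw [← hxm]; simp
      rwa [this]) ((k • ·) ⁻¹' U) (hU.preimage (continuous_const_smul _)) hp
    refine ⟨N, fun n hn x hx => ?_⟩
    have := hN n hn (k⁻¹ • x) ⟨x, hx, rfl⟩
    rw [conj_pow, mul_smul, mul_smul]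
    exact this
  refine ⟨fun e => h1 (MulAction.injective k e), ?_, ?_, key g m p h4, ?_⟩
  · simp [mul_smul, h2]
  · simp [mul_smul, h3]
  · have := key g⁻¹ p m h5
    have e : (k * g * k⁻¹)⁻¹ = k * g⁻¹ * k⁻¹ := by group
    rw [e]; exact this

lemma hyp_ev [CompactSpace X] {g : Γ} {m p : X} (h : IsHyperbolic g m p) {W U : Set X}
    (hW : IsOpen W) (hm : m ∈ W) (hU : IsOpen U) (hp : p ∈ U) :
    ∀ᶠ n : ℕ in atTop, ∀ x, x ∉ W → (g ^ n) • x ∈ U := by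
  obtain ⟨N, hN⟩ := h.2.2.2.1 Wᶜ hW.isClosed_compl.isCompact (by simpa using hm) U hU hp
  filter_upwards [eventually_ge_atTop N] with n hn x hx using hN n hn x hx

lemma hyp_tendsto [CompactSpace X] [T2Space X] {g : Γ} {m p q : X} (h : IsHyperbolic g m p)
    {x : ℕ → X} (hx : Tendsto x atTop (𝓝 q)) (hq : q ≠ m) :
    Tendsto (fun n => (g ^ n) • x n) atTop (𝓝 p) := by
  obtain ⟨W, W', hW, hW', hm, hqW, hd⟩ := t2_separation hq.symm
  rw [tendsto_nhds]
  intro U hU hp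
  filter_upwards [hyp_ev h hW hm hU hp, hx (hW'.mem_nhds hqW)] with n h1 h2
  exact h1 _ (fun h3 => Set.disjoint_left.1 hd h3 h2)

lemma hyp_tendsto_const [CompactSpace X] [T2Space X] {g : Γ} {m p q : X} (h : IsHyperbolic g m p)
    (hq : q ≠ m) :
    Tendsto (fun n => (g ^ n) • q) atTop (𝓝 p) :=
  hyp_tendsto h tendsto_const_nhds hq

lemma smul_pow_fix {g : Γ} {p : X} (h : g • p = p) (n : ℕ) : (g ^ n) • p = p := by
  induction n with
  | zero => simp
  | succ n ih => rw [pow_succ, mul_smul, h, ih]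

lemma hyp_unique_p [CompactSpace X] [T2Space X] [Infinite X] {g : Γ} {m p m' p' : X}
    (h : IsHyperbolic g m p) (h' : IsHyperbolic g m' p') : p = p' := by
  classical
  obtain ⟨x, hx⟩ := Infinite.exists_notMem_finset ({m, m'} : Finset X)
  simp at hx
  exact tendsto_nhds_unique (hyp_tendsto_const h hx.1) (hyp_tendsto_const h' hx.2)

lemma hyp_unique_m [CompactSpace X] [T2Space X] [Infinite X] {g : Γ} {m p m' p' : X}
    (h : IsHyperbolic g m p) (h' : IsHyperbolic g m' p') : m = m' :=
  hyp_unique_p (hyp_inv h) (hyp_inv h')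

/-- an attracting point lies in the closure of an absorbing set -/
lemma pp_closure [CompactSpace X] [T2Space X] {g : Γ} {m p x : X} (h : IsHyperbolic g m p)
    {U V : Set X} (hd : Disjoint U V) (hg : ∀ x, x ∉ V → g • x ∈ U) (hx : x ∉ V) (hxm : x ≠ m) :
    p ∈ closure U := by
  have h1 : ∀ n : ℕ, (g ^ (n + 1)) • x ∈ U := by
    intro n
    induction n with
    | zero => simpa using hg x hx
    | succ n ih =>
      rw [pow_succ', mul_smul]
      exact hg _ (Set.disjoint_left.1 hd ih)
  have h2 := (tendsto_add_atTop_iff_nat 1).2 (hyp_tendsto_const h hxm)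
  exact mem_closure_of_tendsto h2 (Eventually.of_forall h1)

lemma exists_shrink [CompactSpace X] [T2Space X] {x y : X} (hxy : x ≠ y) (E : Finset X)
    (hxE : x ∉ E) (hyE : y ∉ E) {U V : Set X} (hU : U ∈ 𝓝 x) (hV : V ∈ 𝓝 y) :
    ∃ U' V' : Set X, IsOpen U' ∧ IsOpen V' ∧ x ∈ U' ∧ y ∈ V' ∧ closure U' ⊆ U ∧ closure V' ⊆ V ∧
      Disjoint U' V' ∧ (∀ e ∈ E, e ∉ U') ∧ (∀ e ∈ E, e ∉ V') := by
  obtain ⟨P, Q, hP, hQ, hxP, hyQ, hd⟩ := t2_separation hxy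
  have hEc : IsOpen ((E : Set X)ᶜ) := E.finite_toSet.isClosed.isOpen_compl
  have key : ∀ (x : X) (U P : Set X), x ∉ E → U ∈ 𝓝 x → IsOpen P → x ∈ P →
      ∃ U', IsOpen U' ∧ x ∈ U' ∧ closure U' ⊆ U ∩ P ∩ (E : Set X)ᶜ := by
    intro x U P hxE hU hP hxP
    have : U ∩ P ∩ (E : Set X)ᶜ ∈ 𝓝 x :=
      inter_mem (inter_mem hU (hP.mem_nhds hxP)) (hEc.mem_nhds (by simpa using hxE))
    obtain ⟨T, hT, hTc, hTs⟩ := exists_mem_nhds_isClosed_subset this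
    refine ⟨interior T, isOpen_interior, mem_interior_iff_mem_nhds.2 hT, ?_⟩
    exact (closure_minimal interior_subset hTc).trans hTs
  obtain ⟨U', hU', hxU', hs⟩ := key x U P hxE hU hP hxP
  obtain ⟨V', hV', hyV', ht⟩ := key y V Q hyE hV hQ hyQ
  refine ⟨U', V', hU', hV', hxU', hyV', fun z hz => (hs hz).1.1, fun z hz => (ht hz).1.1, ?_, ?_, ?_⟩
  · exact hd.mono (fun z hz => (hs (subset_closure hz)).1.2) (fun z hz => (ht (subset_closure hz)).1.2)
  · intro e he hz
    exact (hs (subset_closure hz)).2 (by simpa using he)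
  · intro e he hz
    exact (ht (subset_closure hz)).2 (by simpa using he)

lemma pingpong [CompactSpace X] [T2Space X] [Infinite X] {pm pp : Γ → X}
    (hyp : ∀ γ : Γ, γ ≠ 1 → IsHyperbolic γ (pm γ) (pp γ)) {a b : Γ} (ha : a ≠ 1) (hb : b ≠ 1)
    (h1 : pm a ≠ pp b) (h2 : pp a ≠ pm b) {U V : Set X} (hU : U ∈ 𝓝 (pp a)) (hV : V ∈ 𝓝 (pm b)) :
    ∀ᶠ n : ℕ in atTop, a ^ n * b ^ n ≠ 1 ∧ pp (a ^ n * b ^ n) ∈ U ∧ pm (a ^ n * b ^ n) ∈ V := by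
  classical
  obtain ⟨e, he⟩ := Infinite.exists_notMem_finset ({pp a, pm b} : Finset X)
  obtain ⟨f, hf⟩ := Infinite.exists_notMem_finset ({pp a, pm b, e} : Finset X)
  simp only [Finset.mem_insert, Finset.mem_singleton, not_or] at he hf
  obtain ⟨U', V', oU, oV, aU, bV, cU, cV, hd, hEU, hEV⟩ := exists_shrink h2 {e, f}
    (by simp only [Finset.mem_insert, Finset.mem_singleton, not_or]
        exact ⟨Ne.symm he.1, Ne.symm hf.1⟩)
    (by simp only [Finset.mem_insert, Finset.mem_singleton, not_or]
        exact ⟨Ne.symm he.2, Ne.symm hf.2.1⟩) hU hV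
  obtain ⟨W, O, oW, oO, aW, bO, hWO⟩ := t2_separation h1
  filter_upwards [hyp_ev (hyp b hb) oV bV oO bO, hyp_ev (hyp a ha) oW aW oU aU] with n hbn han
  have hg : ∀ x, x ∉ V' → (a ^ n * b ^ n) • x ∈ U' := by
    intro x hx
    rw [mul_smul]
    exact han _ (Set.disjoint_right.1 hWO (hbn x hx))
  have hg' : ∀ x, x ∉ U' → (a ^ n * b ^ n)⁻¹ • x ∈ V' := by
    intro x hx
    by_contra hc
    have h3 := hg _ hc
    rw [smul_inv_smul] at h3
    exact hx h3
  have hne : a ^ n * b ^ n ≠ 1 := by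
    intro h
    have := hg e (hEV e (by simp))
    rw [h, one_smul] at this
    exact hEU e (by simp) this
  have H := hyp _ hne
  have ex : ∀ q : X, ∃ x, x ∉ U' ∧ x ∉ V' ∧ x ≠ q := by
    intro q
    by_cases hq : e = q
    · exact ⟨f, hEU f (by simp), hEV f (by simp), fun h => hf.2.2 (h.trans hq.symm)⟩
    · exact ⟨e, hEU e (by simp), hEV e (by simp), hq⟩
  obtain ⟨x, hx1, hx2, hx3⟩ := ex (pm (a ^ n * b ^ n))
  obtain ⟨y, hy1, hy2, hy3⟩ := ex (pp (a ^ n * b ^ n))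
  exact ⟨hne, cU (pp_closure H hd hg hx2 hx3), cV (pp_closure (hyp_inv H) hd.symm hg' hy1 hy3)⟩

lemma no_fixed [T2Space X] [Nontrivial X] (hmin : ∀ x : X, Dense (MulAction.orbit Γ x)) (p : X) :
    ∃ s : Γ, s • p ≠ p := by
  by_contra! hc
  have h1 : MulAction.orbit Γ p = {p} := by
    ext z; constructor
    · rintro ⟨s, rfl⟩; exact hc s
    · rintro rfl; exact MulAction.mem_orbit_self _
  obtain ⟨q, hq⟩ := exists_ne p
  have h2 := (hmin p).closure_eq
  rw [h1, closure_singleton] at h2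
  have : q ∈ ({p} : Set X) := h2 ▸ Set.mem_univ q
  exact hq this

lemma infinite_X [T2Space X] [Nontrivial X]
    (hmin : ∀ x : X, Dense (MulAction.orbit Γ x)) {pm pp : Γ → X}
    (hyp : ∀ γ : Γ, γ ≠ 1 → IsHyperbolic γ (pm γ) (pp γ)) : Infinite X := by
  by_contra hfin
  rw [not_infinite_iff_finite] at hfin
  obtain ⟨p, -⟩ := exists_pair_ne X
  obtain ⟨s, hs⟩ := no_fixed (Γ := Γ) hmin p
  have hs1 : s ≠ 1 := by rintro rfl; simp at hs
  have H := hyp s hs1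
  have hpm : p ≠ pm s := fun h => hs (h ▸ H.2.1)
  have hpp : p ≠ pp s := fun h => hs (h ▸ H.2.2.1)
  have hop : IsOpen ({pp s} : Set X) := by
    rw [← compl_compl ({pp s} : Set X)]
    exact (Set.toFinite _).isClosed.isOpen_compl
  obtain ⟨N, hN⟩ := H.2.2.2.1 {p} isCompact_singleton (by simpa using hpm.symm) {pp s} hop rfl
  have h1 : s ^ N • p = pp s := hN N le_rfl p rfl
  have h2 : s ^ N • pp s = pp s := smul_pow_fix H.2.2.1 N
  exact hpp (MulAction.injective (s ^ N) (h1.trans h2.symm))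

lemma pairs_dense [CompactSpace X] [T2Space X] [Infinite X] [ContinuousConstSMul Γ X] [Nontrivial Γ]
    (hmin : ∀ x : X, Dense (MulAction.orbit Γ x)) {pm pp : Γ → X}
    (hyp : ∀ γ : Γ, γ ≠ 1 → IsHyperbolic γ (pm γ) (pp γ)) {x y : X} (hxy : x ≠ y) :
    (x, y) ∈ closure {q : X × X | ∃ g : Γ, g ≠ 1 ∧ q = (pp g, pm g)} := by
  have conj : ∀ g : Γ, g ≠ 1 → ∀ k : Γ, k * g * k⁻¹ ≠ 1 ∧ pp (k * g * k⁻¹) = k • pp g ∧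
      pm (k * g * k⁻¹) = k • pm g := by
    intro g hg k
    have h0 : k * g * k⁻¹ ≠ 1 := by simpa [conj_eq_one_iff] using hg
    exact ⟨h0, hyp_unique_p (hyp _ h0) (hyp_conj (hyp g hg) k),
      hyp_unique_m (hyp _ h0) (hyp_conj (hyp g hg) k)⟩
  rw [mem_closure_iff_nhds]
  intro T hT
  obtain ⟨U0, hU0, V0, hV0, hUV⟩ := mem_nhds_prod_iff.1 hT
  obtain ⟨U, V, oU, oV, xU, yV, cU, cV, hd, -, -⟩ :=
    exists_shrink hxy ∅ (by simp) (by simp) hU0 hV0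
  obtain ⟨γ, hγ⟩ := exists_ne (1 : Γ)
  obtain ⟨_, hhU, h, rfl⟩ := (hmin (pp γ)).inter_open_nonempty U oU ⟨x, xU⟩
  obtain ⟨_, hkV, k, rfl⟩ := (hmin (pm γ)).inter_open_nonempty V oV ⟨y, yV⟩
  simp only at hhU hkV
  have main : ∀ a b : Γ, a ≠ 1 → b ≠ 1 → pp a ∈ U → pm b ∈ V → pm a ≠ pp b →
      (T ∩ {q : X × X | ∃ g : Γ, g ≠ 1 ∧ q = (pp g, pm g)}).Nonempty := by
    intro a b ha hb haU hbV hab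
    have hne : pp a ≠ pm b := fun e => Set.disjoint_left.1 hd haU (e ▸ hbV)
    obtain ⟨n, h1, h2, h3⟩ :=
      (pingpong hyp ha hb hab hne (oU.mem_nhds haU) (oV.mem_nhds hbV)).exists
    exact ⟨_, hUV ⟨cU (subset_closure h2), cV (subset_closure h3)⟩, _, h1, rfl⟩
  obtain ⟨ha, hap, ham⟩ := conj γ hγ h
  obtain ⟨hb, hbp, hbm⟩ := conj γ hγ k
  rw [← hap] at hhU
  rw [← hbm] at hkV
  generalize h * γ * h⁻¹ = a at *
  generalize k * γ * k⁻¹ = b at *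
  by_cases hab : pm a = pp b
  · obtain ⟨s, hs⟩ := no_fixed (Γ := Γ) hmin (pm a)
    have hs1 : s ≠ 1 := by rintro rfl; simp at hs
    have hm : pm s ≠ pm a := fun e => hs (e ▸ (hyp s hs1).2.1)
    have hp : pp s ≠ pm a := fun e => hs (e ▸ (hyp s hs1).2.2.1)
    obtain ⟨n, hn⟩ := ((hyp_tendsto_const (hyp a ha) hp).eventually (oU.mem_nhds hhU)).exists
    obtain ⟨hc, hcp, hcm⟩ := conj s hs1 (a ^ n)
    refine main _ b hc hb (hcp ▸ hn) hkV ?_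
    rw [hcm, ← hab]
    intro e
    apply hm
    have : a ^ n • pm s = a ^ n • pm a := e.trans (smul_pow_fix (hyp a ha).2.1 n).symm
    exact MulAction.injective _ this
  · exact main a b ha hb hhU hkV hab

lemma cocycle_pow {c : Γ → X → ℝ} (hc : IsCocycle c) {g : Γ} {x : X} (hx : g • x = x)
    (h0 : c g x = 0) (n : ℕ) : c (g ^ n) x = 0 := by
  induction n with
  | zero => have := hc 1 1 x; simp at this; simpa using this
  | succ n ih => rw [pow_succ, hc, hx, ih, h0]; simp

lemma cross [CompactSpace X] [T2Space X] [Infinite X] {pm pp : Γ → X}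
    (hyp : ∀ γ : Γ, γ ≠ 1 → IsHyperbolic γ (pm γ) (pp γ)) {c : Γ → X → ℝ} {C : X → X → ℝ}
    (hc : IsBCocycle c C) (h0 : ∀ γ : Γ, γ ≠ 1 → c γ (pp γ) = 0) {a b : Γ} (ha : a ≠ 1) (hb : b ≠ 1)
    (h1 : pm a ≠ pp b) (h2 : pp a ≠ pm b) :
    C (pp a) (pm a) + C (pp b) (pm b) - C (pp a) (pm b) - C (pp b) (pm a) = 0 := by
  obtain ⟨hco, -, hCc, hC⟩ := hc
  have hm : ∀ γ : Γ, γ ≠ 1 → c γ (pm γ) = 0 := by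
    intro γ hγ
    have := hC γ (pp γ) (pm γ) (hyp γ hγ).1.symm
    rw [(hyp γ hγ).2.1, (hyp γ hγ).2.2.1, h0 γ hγ] at this
    linarith
  have hpow : ∀ γ : Γ, γ ≠ 1 → ∀ n : ℕ, ∀ x, x ≠ pm γ →
      c (γ ^ n) x = C (γ ^ n • x) (pm γ) - C x (pm γ) := by
    intro γ hγ n x hx
    have := hC (γ ^ n) x (pm γ) hx
    rw [smul_pow_fix (hyp γ hγ).2.1, cocycle_pow hco (hyp γ hγ).2.1 (hm γ hγ)] at this
    linarith
  have hlim : ∀ {u : ℕ → X} {p q : X}, Tendsto u atTop (𝓝 p) → p ≠ q →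
      Tendsto (fun n => C (u n) q) atTop (𝓝 (C p q)) := by
    intro u p q hu hpq
    have hopen : IsOpen {q : X × X | q.1 ≠ q.2} := isOpen_ne_fun continuous_fst continuous_snd
    have h1 := hCc.continuousAt (x := (p, q)) (hopen.mem_nhds hpq)
    exact h1.tendsto.comp (hu.prodMk_nhds tendsto_const_nhds)
  have hx : Tendsto (fun n => pp (a ^ n * b ^ n)) atTop (𝓝 (pp a)) := by
    intro U hU
    rw [mem_map]
    filter_upwards [pingpong hyp ha hb h1 h2 hU univ_mem] with n hn using hn.2.1
  have hy : Tendsto (fun n => b ^ n • pp (a ^ n * b ^ n)) atTop (𝓝 (pp b)) :=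
    hyp_tendsto (hyp b hb) hx h2
  have hT := (((hlim hx (hyp a ha).1.symm).sub (hlim hy h1.symm)).add
    ((hlim hy (hyp b hb).1.symm).sub (hlim hx h2)))
  have hE : ∀ᶠ n : ℕ in atTop, (0 : ℝ) = C (pp (a ^ n * b ^ n)) (pm a) -
      C (b ^ n • pp (a ^ n * b ^ n)) (pm a) + (C (b ^ n • pp (a ^ n * b ^ n)) (pm b) -
      C (pp (a ^ n * b ^ n)) (pm b)) := by
    filter_upwards [pingpong hyp ha hb h1 h2 univ_mem univ_mem,
      hx (isOpen_ne.mem_nhds h2), hy (isOpen_ne.mem_nhds h1.symm)] with n hn hn1 hn2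
    have e1 := hpow b hb n _ hn1
    have e2 := hpow a ha n _ hn2
    rw [← mul_smul, (hyp _ hn.1).2.2.1] at e2
    have e3 := h0 _ hn.1
    rw [hco, e2, e1] at e3
    exact e3.symm
  have := tendsto_nhds_unique (tendsto_const_nhds.congr' hE) hT
  linarith

lemma cross_all [CompactSpace X] [T2Space X] [Infinite X] [ContinuousConstSMul Γ X] [Nontrivial Γ]
    (hmin : ∀ x : X, Dense (MulAction.orbit Γ x)) {pm pp : Γ → X}
    (hyp : ∀ γ : Γ, γ ≠ 1 → IsHyperbolic γ (pm γ) (pp γ)) {c : Γ → X → ℝ} {C : X → X → ℝ}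
    (hc : IsBCocycle c C) (h0 : ∀ γ : Γ, γ ≠ 1 → c γ (pp γ) = 0) {x y z w : X}
    (hxy : x ≠ y) (hzw : z ≠ w) (hxw : x ≠ w) (hzy : z ≠ y) :
    C x y + C z w - C x w - C z y = 0 := by
  set P := {q : X × X | ∃ g : Γ, g ≠ 1 ∧ q = (pp g, pm g)}
  have hq : ((x, y), (z, w)) ∈ closure (P ×ˢ P) := by
    rw [closure_prod_eq]
    exact ⟨pairs_dense hmin hyp hxy, pairs_dense hmin hyp hzw⟩
  have hopen : IsOpen {q : X × X | q.1 ≠ q.2} := isOpen_ne_fun continuous_fst continuous_snd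
  have hCa : ∀ (f g : (X × X) × (X × X) → X), Continuous f → Continuous g →
      ∀ q, f q ≠ g q → Tendsto (fun q => C (f q) (g q)) (𝓝 q) (𝓝 (C (f q) (g q))) := by
    intro f g hf hg q hq
    have h1 := hc.2.2.1.continuousAt (x := (f q, g q)) (hopen.mem_nhds hq)
    exact h1.tendsto.comp (hf.continuousAt.tendsto.prodMk_nhds hg.continuousAt.tendsto)
  have hT := ((((hCa (fun q => q.1.1) (fun q => q.1.2) (by fun_prop) (by fun_prop)
      ((x, y), (z, w)) hxy).add
    (hCa (fun q => q.2.1) (fun q => q.2.2) (by fun_prop) (by fun_prop) ((x, y), (z, w)) hzw)).sub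
    (hCa (fun q => q.1.1) (fun q => q.2.2) (by fun_prop) (by fun_prop) ((x, y), (z, w)) hxw)).sub
    (hCa (fun q => q.2.1) (fun q => q.1.2) (by fun_prop) (by fun_prop) ((x, y), (z, w)) hzy))
  have hT' := hT.mono_left (nhdsWithin_le_nhds (s := P ×ˢ P))
  have : (𝓝[P ×ˢ P] ((x, y), (z, w))).NeBot := mem_closure_iff_nhdsWithin_neBot.1 hq
  have o1 : ∀ᶠ q : (X × X) × (X × X) in 𝓝[P ×ˢ P] ((x, y), (z, w)), q.1.1 ≠ q.2.2 :=
    nhdsWithin_le_nhds ((isOpen_ne_fun (f := fun q : (X × X) × (X × X) => q.1.1)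
      (g := fun q => q.2.2) (by fun_prop) (by fun_prop)).mem_nhds hxw)
  have o2 : ∀ᶠ q : (X × X) × (X × X) in 𝓝[P ×ˢ P] ((x, y), (z, w)), q.2.1 ≠ q.1.2 :=
    nhdsWithin_le_nhds ((isOpen_ne_fun (f := fun q : (X × X) × (X × X) => q.2.1)
      (g := fun q => q.1.2) (by fun_prop) (by fun_prop)).mem_nhds hzy)
  have hE : ∀ᶠ q : (X × X) × (X × X) in 𝓝[P ×ˢ P] ((x, y), (z, w)),
      (0 : ℝ) = C q.1.1 q.1.2 + C q.2.1 q.2.2 - C q.1.1 q.2.2 - C q.2.1 q.1.2 := by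
    filter_upwards [o1, o2, self_mem_nhdsWithin] with q h1 h2 h3
    obtain ⟨⟨a, ha, hqa⟩, ⟨b, hb, hqb⟩⟩ := h3
    rw [hqa, hqb] at h1 h2 ⊢
    exact (cross hyp hc h0 ha hb h2.symm h1).symm
  exact (tendsto_nhds_unique (tendsto_const_nhds.congr' hE) hT').symm

lemma split_S {X : Type*} [Infinite X] {S : X → X → ℝ} (hs : ∀ x y, S x y = S y x)
    (hD : ∀ x y z w, x ≠ y → z ≠ w → x ≠ w → z ≠ y → S x y + S z w - S x w - S z y = 0) :
    ∃ φ : X → ℝ, ∀ x y, x ≠ y → S x y = φ x + φ y := by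
  classical
  have key : ∀ x, ∃ v : ℝ, ∀ y z, y ≠ x → z ≠ x → y ≠ z → v = (S x y + S x z - S y z) / 2 := by
    intro x
    have step : ∀ y z z', y ≠ x → z ≠ x → y ≠ z → z' ≠ x → y ≠ z' →
        (S x y + S x z - S y z) / 2 = (S x y + S x z' - S y z') / 2 := by
      intro y z z' h1 h2 h3 h4 h5
      have := hD x z y z' h2.symm h5 h4.symm h3
      linarith
    have sw : ∀ y z, (S x y + S x z - S y z) / 2 = (S x z + S x y - S z y) / 2 := by
      intro y z; rw [hs y z]; ring
    obtain ⟨a, ha⟩ := Infinite.exists_notMem_finset ({x} : Finset X)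
    obtain ⟨b, hb⟩ := Infinite.exists_notMem_finset ({x, a} : Finset X)
    simp only [Finset.mem_insert, Finset.mem_singleton, not_or] at ha hb
    refine ⟨(S x a + S x b - S a b) / 2, fun y z hy hz hyz => ?_⟩
    obtain ⟨w, hw⟩ := Infinite.exists_notMem_finset ({x, a, b, y, z} : Finset X)
    simp only [Finset.mem_insert, Finset.mem_singleton, not_or] at hw
    obtain ⟨w1, w2, w3, w4, w5⟩ := hw
    rw [step a b w ha hb.1 (Ne.symm hb.2) w1 (Ne.symm w2), sw a w,
      step w a y w1 ha w2 hy w4, sw w y, step y w z hy w1 (Ne.symm w4) hz hyz]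
  choose φ hφ using key
  refine ⟨φ, fun x y hxy => ?_⟩
  obtain ⟨z, hz⟩ := Infinite.exists_notMem_finset ({x, y} : Finset X)
  simp only [Finset.mem_insert, Finset.mem_singleton, not_or] at hz
  rw [hφ x y z hxy.symm hz.1 (Ne.symm hz.2), hφ y x z hxy hz.2 (Ne.symm hz.1), hs y x]
  ring

lemma main [CompactSpace X] [T2Space X] [Nontrivial X] [ContinuousConstSMul Γ X] [Nontrivial Γ]
    (hmin : ∀ x : X, Dense (MulAction.orbit Γ x)) {pm pp : Γ → X}
    (hyp : ∀ γ : Γ, γ ≠ 1 → IsHyperbolic γ (pm γ) (pp γ)) {c : Γ → X → ℝ} {C : X → X → ℝ}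
    (hc : IsBCocycle c C) (h0 : ∀ γ : Γ, γ ≠ 1 → c γ (pp γ) = 0) :
    ∃ φ : X → ℝ, Continuous φ ∧ ∀ γ : Γ, ∀ x : X, c γ x = φ (γ • x) - φ x := by
  classical
  have := infinite_X hmin hyp
  have hD := @cross_all Γ X _ _ _ _ _ _ _ _ hmin pm pp hyp c C hc h0
  obtain ⟨φ, hφ⟩ := split_S (S := fun x y => (C x y + C y x) / 2) (fun x y => by ring) (by
    intro x y z w h1 h2 h3 h4
    have e1 := hD h1 h2 h3 h4
    have e2 := hD h1.symm h2.symm h4.symm h3.symm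
    linarith)
  have hopen : IsOpen {q : X × X | q.1 ≠ q.2} := isOpen_ne_fun continuous_fst continuous_snd
  have three : ∀ x : X, ∃ y z : X, y ≠ x ∧ z ≠ x ∧ y ≠ z := by
    intro x
    obtain ⟨a, ha⟩ := Infinite.exists_notMem_finset ({x} : Finset X)
    obtain ⟨b, hb⟩ := Infinite.exists_notMem_finset ({x, a} : Finset X)
    simp only [Finset.mem_insert, Finset.mem_singleton, not_or] at ha hb
    exact ⟨a, b, ha, hb.1, Ne.symm hb.2⟩
  refine ⟨φ, continuous_iff_continuousAt.2 fun x => ?_, fun γ x => ?_⟩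
  · obtain ⟨y, -, hy, -, -⟩ := three x
    have h1 : Tendsto (fun t => C t y) (𝓝 x) (𝓝 (C x y)) :=
      (hc.2.2.1.continuousAt (x := (x, y)) (hopen.mem_nhds hy.symm)).tendsto.comp
        (tendsto_id.prodMk_nhds tendsto_const_nhds)
    have h2 : Tendsto (fun t => C y t) (𝓝 x) (𝓝 (C y x)) :=
      (hc.2.2.1.continuousAt (x := (y, x)) (hopen.mem_nhds hy)).tendsto.comp
        (tendsto_const_nhds.prodMk_nhds tendsto_id)
    have h3 := ((h1.add h2).div_const 2).sub_const (φ y)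
    have e : φ x = (C x y + C y x) / 2 - φ y := by rw [hφ x y hy.symm]; ring
    rw [ContinuousAt, e]
    refine h3.congr' ?_
    filter_upwards [isOpen_ne.mem_nhds hy.symm] with t ht
    rw [hφ t y ht]; ring
  · have pair : ∀ x y, x ≠ y → c γ x + c γ y = (φ (γ • x) - φ x) + (φ (γ • y) - φ y) := by
      intro x y hxy
      have e1 := hc.2.2.2 γ x y hxy
      have e2 := hc.2.2.2 γ y x hxy.symm
      have e3 := hφ x y hxy
      have e4 := hφ (γ • x) (γ • y) (fun h => hxy (MulAction.injective γ h))
      linarith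
    obtain ⟨y, z, hy, hz, hyz⟩ := three x
    have e1 := pair x y hy.symm
    have e2 := pair x z hz.symm
    have e3 := pair y z hyz
    linarith

end GB

theorem stmt0 {Γ X : Type*} [Group Γ] [Nontrivial Γ] [TopologicalSpace X]
    [MeasurableSpace X] [MulAction Γ X]
    (pm pp : Γ → X) (hgb : IsGeometricBoundary Γ X pm pp)
    (α β : Γ → X → ℝ) (A B : X → X → ℝ)
    (hα : IsBCocycle α A) (hβ : IsBCocycle β B) :
    (∀ γ : Γ, γ ≠ 1 → α γ (pp γ) = β γ (pp γ)) ↔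
      ∃ φ : X → ℝ, Continuous φ ∧ ∀ γ : Γ, ∀ x : X, α γ x - β γ x = φ (γ • x) - φ x := by
  constructor
  · intro h
    have := hgb.compact
    have := hgb.t2
    have := hgb.nontrivial
    have := hgb.contSMul
    refine GB.main hgb.minimal hgb.hyp (c := fun γ x => α γ x - β γ x)
      (C := fun x y => A x y - B x y) ⟨?_, ?_, ?_, ?_⟩ ?_
    · intro γ η x
      simp only [hα.1 γ η x, hβ.1 γ η x]
      ring
    · exact fun γ => (hα.2.1 γ).sub (hβ.2.1 γ)
    · exact hα.2.2.1.sub hβ.2.2.1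
    · intro γ x y hxy
      have e1 := hα.2.2.2 γ x y hxy
      have e2 := hβ.2.2.2 γ x y hxy
      simp only
      linarith
    · intro γ hγ
      simp only [h γ hγ, sub_self]
  · rintro ⟨φ, -, hφ⟩ γ hγ
    have := hφ γ (pp γ)
    rw [(hgb.hyp γ hγ).2.2.1] at this
    linarith
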